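/- For every natural number n > 4, there is no finite abelian group G (of order n(n−1)/2) containing a (n(n−1)/2, 2(n−2), n−2, 4) partial difference set. (These are the parameters of the triangular graph T_n.) -/

import Mathlib

/-!
Suppose `S` is such a partial difference set. In the integral group ring, with `J` the sum of all
group elements, `S` satisfies `(S - (n - 4)) (S + 2) = 4 J`. One of `n`, `n - 1` is odd and at
least `5`; an odd prime factor `p` of it divides `|G|` but not `n - 2`, which is the difference of
the two roots `n - 4` and `-2`. Modulo `p` the polynomial `X ^ p - X` is therefore divisible by
`(X - (n - 4)) (X + 2)`, so that `S ^ p = S + c J` in `𝔽_p[G]` for some scalar `c`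
(`exists_pow_sub_eq`, `exists_mul_sum_eq`). As `G` is commutative, Frobenius gives
`S ^ p = ∑ x ∈ S, x ^ p`, which has coefficient `0` at every `g` that is not a `p`-th power. So the
indicator function of `S` is constant outside the subgroup `H` of `p`-th powers
(`IsPDS.subset_or_disjoint_of_prime`), which has index at least `p ≥ 3` by Cauchy's theorem.

If `S` misses the complement of `H`, then `S ⊆ H`, and an element outside `H` has no
representation `x y⁻¹` with `x, y ∈ S`, although it should have `4`. If `S` contains the complement
of `H`, then `3 |S| ≥ 2 |G|`, that is `6 (n - 2) ≥ n (n - 1)`, which fails for `n > 4`.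
-/

attribute [local instance] Classical.propDecidable

/-- `S` is a `(v,k,l,m)` partial difference set in the group `G`:
`G` has order `v`, `|S| = k`, `1 ∉ S`, `S = S⁻¹`, and every nonidentity `g ∈ G` has exactly
`l` (resp. `m`) representations `g = x * y⁻¹` with `x, y ∈ S` when `g ∈ S` (resp. `g ∉ S`). -/
def IsPDS {G : Type*} [Group G] (v k l m : ℕ) (S : Set G) : Prop :=
  Nat.card G = v ∧ Nat.card S = k ∧ (1 : G) ∉ S ∧ (∀ s ∈ S, s⁻¹ ∈ S) ∧
  ∀ g : G, g ≠ 1 →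
    Nat.card {p : ↥S × ↥S // (p.1 : G) * (p.2 : G)⁻¹ = g} = if g ∈ S then l else m

open MonoidAlgebra in
/-- The sum `J` of all group elements is an eigenvector of every multiplication operator of the
group algebra. -/
lemma exists_mul_sum_eq {R G : Type*} [CommRing R] [CommGroup G] [Fintype G]
    (x : MonoidAlgebra R G) :
    ∃ c : R, x * ∑ g : G, single g (1 : R) = c • ∑ g : G, single g (1 : R) := by
  induction x using MonoidAlgebra.induction_linear with
  | zero => exact ⟨0, by simp⟩
  | add x y hx hy =>
    obtain ⟨a, ha⟩ := hx
    obtain ⟨b, hb⟩ := hy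
    exact ⟨a + b, by rw [add_mul, ha, hb, add_smul]⟩
  | single h r =>
    refine ⟨r, ?_⟩
    rw [Finset.mul_sum, Finset.smul_sum]
    simp only [single_mul_single, mul_one, smul_single, smul_eq_mul]
    exact Fintype.sum_equiv (Equiv.mulLeft h) _ _ fun _ => rfl

open Polynomial in
/-- Over `𝔽_p`, the polynomial `X ^ p - X` is divisible by `(X - a) (X - b)` for distinct `a`, `b`;
this is that divisibility, evaluated at an element of an `𝔽_p`-algebra. -/
lemma exists_pow_sub_eq {p : ℕ} [Fact p.Prime] {R : Type*} [CommRing R] [Algebra (ZMod p) R]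
    {a b : ZMod p} (hab : a ≠ b) (s : R) :
    ∃ q : R, s ^ p - s =
      (s - algebraMap (ZMod p) R a) * (s - algebraMap (ZMod p) R b) * q := by
  have hroot : ∀ c : ZMod p, X - C c ∣ (X ^ p - X : (ZMod p)[X]) := fun c => by
    rw [dvd_iff_isRoot]
    simp [IsRoot, ZMod.pow_card]
  have hco : IsCoprime (X - C a) (X - C b) :=
    isCoprime_X_sub_C_of_isUnit_sub (sub_ne_zero.2 hab).isUnit
  obtain ⟨q, hq⟩ := hco.mul_dvd (hroot a) (hroot b)
  refine ⟨aeval s q, ?_⟩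
  simpa using congrArg (aeval s) hq

open MonoidAlgebra in
/-- Let `a`, `b` be the nontrivial eigenvalues, modulo a prime `p`, of a partial difference set `S`
in an abelian group. If they are distinct, then `S` contains all or none of the elements that are
not `p`-th powers. -/
lemma IsPDS.subset_or_disjoint_of_prime {G : Type*} [CommGroup G] [Finite G] {v k l m : ℕ}
    {S : Set G} (h : IsPDS v k l m S) {p : ℕ} [Fact p.Prime] {a b : ZMod p} (hab : a ≠ b)
    (hadd : a + b = l - m) (hmul : a * b = m - k) :
    (∀ g : G, g ∉ (powMonoidHom p : G →* G).range → g ∈ S) ∨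
      (∀ g : G, g ∉ (powMonoidHom p : G →* G).range → g ∉ S) := by
  obtain ⟨-, hk, h1, hinv, hS⟩ := h
  have : Fintype G := Fintype.ofFinite G
  have : CharP (MonoidAlgebra (ZMod p) G) p :=
    charP_of_injective_algebraMap (algebraMap (ZMod p) (MonoidAlgebra (ZMod p) G)).injective p
  set s : MonoidAlgebra (ZMod p) G := ∑ x : S, single (x : G) 1 with hs
  set J : MonoidAlgebra (ZMod p) G := ∑ g : G, single g 1 with hJ
  have hsc : ∀ g, s.coeff g = if g ∈ S then 1 else 0 := fun g => by
    simp only [hs, coeff_sum, coeff_single, Finsupp.finsetSum_apply, Finsupp.single_apply]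
    rw [Finset.sum_boole]
    split_ifs with hg
    · rw [Finset.card_eq_one.2 ⟨⟨g, hg⟩, by ext x; simp [Subtype.ext_iff]⟩]
      simp
    · rw [Finset.card_eq_zero.2 (by
        ext x
        simp only [Finset.mem_filter, Finset.notMem_empty, iff_false, not_and]
        rintro - rfl
        exact hg x.2)]
      simp
  have hJc : ∀ g, J.coeff g = 1 := fun g => by
    simp [hJ, coeff_sum, coeff_single, Finsupp.finsetSum_apply, Finsupp.single_apply]
  have hs' : s = ∑ x : S, single (x : G)⁻¹ 1 :=
    Fintype.sum_equiv ⟨fun x => ⟨(x : G)⁻¹, hinv _ x.2⟩, fun x => ⟨(x : G)⁻¹, hinv _ x.2⟩,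
      fun x => by simp, fun x => by simp⟩ _ _ fun x => by simp
  have hss : ∀ g, (s * s).coeff g =
      (Nat.card {p : ↥S × ↥S // (p.1 : G) * (p.2 : G)⁻¹ = g} : ZMod p) := fun g => by
    rw [show s * s = (∑ x : S, single (x : G) 1) * ∑ x : S, single (x : G)⁻¹ 1 by rw [← hs', ← hs],
      Finset.sum_mul_sum, ← Finset.sum_product']
    simp only [single_mul_single, mul_one, coeff_sum, coeff_single, Finsupp.finsetSum_apply,
      Finsupp.single_apply]
    rw [Finset.sum_boole, Nat.card_eq_fintype_card, Fintype.card_subtype]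
    rfl
  have hquad : (s - algebraMap (ZMod p) _ a) * (s - algebraMap (ZMod p) _ b) = (m : ZMod p) • J := by
    have e : (s - algebraMap (ZMod p) _ a) * (s - algebraMap (ZMod p) _ b) =
        s * s - (a + b) • s + (a * b) • (1 : MonoidAlgebra (ZMod p) G) := by
      simp only [Algebra.smul_def, map_add, map_mul]
      ring
    rw [e]
    ext g
    simp only [coeff_add, coeff_sub, coeff_smul, Finsupp.add_apply, Finsupp.sub_apply,
      Finsupp.smul_apply, hss, hsc, hJc, smul_eq_mul, hadd, hmul, one_def, coeff_single]
    by_cases hg : g = 1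
    · -- the representations of `1` are the pairs `(x, x)`
      have hcard : Nat.card {p : ↥S × ↥S // (p.1 : G) * (p.2 : G)⁻¹ = 1} = k := by
        rw [← hk]
        refine Nat.card_congr ⟨fun p => p.1.1, fun x => ⟨(x, x), by simp⟩, ?_, fun x => rfl⟩
        rintro ⟨⟨x, y⟩, hxy⟩
        have : x = y := Subtype.ext (mul_inv_eq_one.1 hxy)
        simp [this]
      subst hg
      rw [hcard]
      simp [h1]
    · rw [hS g hg, Finsupp.single_eq_of_ne hg]
      split_ifs <;> simp
  obtain ⟨q, hq⟩ := exists_pow_sub_eq hab s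
  obtain ⟨c, hc⟩ := exists_mul_sum_eq q
  rw [hquad, smul_mul_assoc, mul_comm, hc, smul_smul] at hq
  have key : ∀ g : G, g ∉ (powMonoidHom p : G →* G).range →
      (if g ∈ S then 1 else 0 : ZMod p) = -(m * c) := fun g hg => by
    have h0 : (s ^ p).coeff g = 0 := by
      rw [hs, sum_pow_char]
      simp only [single_pow, one_pow, coeff_sum, coeff_single, Finsupp.finsetSum_apply]
      refine Finset.sum_eq_zero fun x _ => Finsupp.single_eq_of_ne ?_
      rintro rfl
      exact hg ⟨x, rfl⟩
    have := congrArg (fun x => x.coeff g) hq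
    simp only [coeff_sub, coeff_smul, Finsupp.sub_apply, Finsupp.smul_apply, h0, hsc, ← hJ, hJc,
      smul_eq_mul, mul_one, zero_sub] at this
    rw [← this, neg_neg]
  by_cases hc1 : -(m * c) = (1 : ZMod p)
  · left
    intro g hg
    by_contra hgS
    have := key g hg
    rw [if_neg hgS, hc1] at this
    exact zero_ne_one this
  · right
    intro g hg hgS
    have := key g hg
    rw [if_pos hgS] at this
    exact hc1 this.symm

/-- If `p` divides the order of `G`, the subgroup of `p`-th powers has index at least `p`. -/
lemma mul_card_range_powMonoidHom_le {G : Type*} [CommGroup G] [Finite G] {p : ℕ} [Fact p.Prime]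
    (hp : p ∣ Nat.card G) :
    p * Nat.card (powMonoidHom p : G →* G).range ≤ Nat.card G := by
  obtain ⟨x, hx⟩ := exists_prime_orderOf_dvd_card' p hp
  have hle : p ≤ Nat.card (powMonoidHom p : G →* G).ker := by
    rw [← hx, ← Nat.card_zpowers]
    exact Subgroup.card_le_of_le (by simp)
  rw [← Subgroup.card_mul_index (powMonoidHom p : G →* G).ker, Subgroup.index_ker]
  exact Nat.mul_le_mul_right _ hle

/-- An odd prime dividing `n (n - 1)` exists because one of the coprime factors is odd; it cannot
divide `n - 2`, since it would then divide `2` or `1`. -/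
lemma exists_prime_dvd_not_dvd {n : ℕ} (hn : 4 < n) :
    ∃ p : ℕ, p.Prime ∧ 3 ≤ p ∧ p ∣ n * (n - 1) / 2 ∧ ¬ p ∣ n - 2 := by
  obtain ⟨t, ht, hdvd, hcases⟩ : ∃ t, Odd t ∧ t ∣ n * (n - 1) ∧ (t = n ∨ t = n - 1) := by
    rcases Nat.even_or_odd n with he | ho
    · exact ⟨n - 1, Nat.Even.sub_odd (by omega) he odd_one, Dvd.intro_left _ rfl, .inr rfl⟩
    · exact ⟨n, ho, Dvd.intro _ rfl, .inl rfl⟩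
  obtain ⟨p, hp, hpt⟩ := Nat.exists_prime_and_dvd (show t ≠ 1 by omega)
  have hp2 : p ≠ 2 := by
    rintro rfl
    exact Nat.not_even_iff_odd.2 ht (even_iff_two_dvd.2 hpt)
  have hp3 : 3 ≤ p := by have := hp.two_le; omega
  refine ⟨p, hp, hp3, ?_, fun hd => ?_⟩
  · have hv : 2 * (n * (n - 1) / 2) = n * (n - 1) :=
      Nat.mul_div_cancel' (Nat.even_mul_pred_self n).two_dvd
    have : p ∣ 2 * (n * (n - 1) / 2) := by
      rw [hv]
      exact hpt.trans hdvd
    exact (hp.dvd_mul.1 this).resolve_left fun h2 => by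
      have := Nat.le_of_dvd two_pos h2
      omega
  · have := Nat.dvd_sub hpt hd
    have := Nat.le_of_dvd (by omega) this
    omega

/-- For `n > 4` there is no abelian `(n(n−1)/2, 2(n−2), n−2, 4)` partial difference set. -/
theorem stmt_7 (n : ℕ) (hn : 4 < n) {G : Type*} [CommGroup G] [Finite G] (S : Set G) :
    ¬ IsPDS (n * (n - 1) / 2) (2 * (n - 2)) (n - 2) 4 S := by
  intro h
  obtain ⟨p, hp, hp3, hpv, hpn⟩ := exists_prime_dvd_not_dvd hn
  have : Fact p.Prime := ⟨hp⟩
  obtain ⟨r, rfl⟩ : ∃ r, n = r + 4 := ⟨n - 4, by omega⟩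
  -- the eigenvalues `n - 4` and `-2` are distinct modulo `p`, as `p ∤ n - 2`
  have hab : (r : ZMod p) ≠ -2 := fun e => hpn <| by
    rw [← CharP.cast_eq_zero_iff (ZMod p) p, show r + 4 - 2 = r + 2 by omega]
    push_cast
    rw [e]
    ring
  have hdich := h.subset_or_disjoint_of_prime hab
    (by rw [show r + 4 - 2 = r + 2 by omega]; push_cast; ring)
    (by rw [show r + 4 - 2 = r + 2 by omega]; push_cast; ring)
  obtain ⟨hv, hk, -, -, hS⟩ := h
  have hidx := mul_card_range_powMonoidHom_le (G := G) (p := p) (hv ▸ hpv)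
  set H := (powMonoidHom p : G →* G).range with hH
  have hHpos : 0 < Nat.card H := Nat.card_pos
  have h3 : 3 * Nat.card H ≤ Nat.card G := (Nat.mul_le_mul_right _ hp3).trans hidx
  rcases hdich with hsub | hdisj
  · have hcard : Nat.card G ≤ Nat.card H + Nat.card S := by
      have hun : (H : Set G) ∪ S = Set.univ := Set.eq_univ_of_forall fun g => by
        by_cases hg : g ∈ H
        · exact .inl hg
        · exact .inr (hsub g hg)
      rw [← Set.ncard_univ, ← hun]
      exact Set.ncard_union_le _ _
    have hv2 : 2 * ((r + 4) * (r + 4 - 1) / 2) = (r + 4) * (r + 4 - 1) :=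
      Nat.mul_div_cancel' (Nat.even_mul_pred_self _).two_dvd
    rw [← hv, show r + 4 - 1 = r + 3 by omega] at hv2
    rw [show r + 4 - 2 = r + 2 by omega] at hk
    have : 1 ≤ r := by omega
    nlinarith
  · have hSH : ∀ x ∈ S, x ∈ H := fun x hx => by
      by_contra hxH
      exact hdisj x hxH hx
    obtain ⟨g, hg⟩ : ∃ g, g ∉ H := by
      by_contra! hall
      have : H = ⊤ := (Subgroup.eq_top_iff' H).2 hall
      rw [this, Subgroup.card_top] at h3
      have : 0 < Nat.card G := Nat.card_pos
      omega
    have h4 := hS g (fun e => hg (e ▸ H.one_mem))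
    rw [if_neg (hdisj g hg)] at h4
    obtain ⟨⟨⟨x, y⟩, hxy⟩⟩ := (Nat.card_pos_iff.1 (h4 ▸ four_pos)).1
    exact hg (hxy ▸ H.mul_mem (hSH x x.2) (H.inv_mem (hSH y y.2)))
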